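/- In the gluing setup, suppose that S_i^± is π₁-injective in M_{j^±(i)} for all i ∈ {1,…,l}. Then cat_Am(M) ≤ max_{j∈{1,…,k}} cat_Am(M_j) + max_{i∈{1,…,l}} ( cat_Am(S_i⁺) + 1 ). -/

import Mathlib

open scoped Topology
open CategoryTheory

noncomputable section

/-- The closed unit disk `Dⁿ ⊆ ℝⁿ`. -/
def UnitDisk (n : ℕ) : Set (EuclideanSpace ℝ (Fin n)) := Metric.closedBall 0 1

/-- The unit sphere `Sⁿ⁻¹ ⊆ ℝⁿ` (the boundary of `Dⁿ`). -/
def UnitSphere (n : ℕ) : Set (EuclideanSpace ℝ (Fin n)) := Metric.sphere 0 1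

/-- A CW-structure on a topological space (the non-equivariant case of a `G`-CW-structure). -/
structure CWStructure (X : Type) [TopologicalSpace X] : Type 1 where
  t2 : T2Space X
  cells : ℕ → Type
  charMap : ∀ n, cells n → UnitDisk n → X
  charMap_continuous : ∀ n i, Continuous (charMap n i)
  sphere_le : ∀ n i (z : UnitDisk n), ‖(z : EuclideanSpace ℝ (Fin n))‖ = 1 →
    ∃ (m : ℕ) (_ : m < n) (j : cells m) (w : UnitDisk m),
      ‖(w : EuclideanSpace ℝ (Fin m))‖ < 1 ∧ charMap m j w = charMap n i z
  partition : ∀ x : X, ∃! p : Σ (n : ℕ) (_ : cells n), UnitDisk n,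
      ‖(p.2.2 : EuclideanSpace ℝ (Fin p.1))‖ < 1 ∧ charMap p.1 p.2.1 p.2.2 = x
  weak_topology : ∀ A : Set X, IsClosed A ↔ ∀ n i, IsClosed (charMap n i ⁻¹' A)

/-- The CW-complex has dimension at most `c`. -/
def CWStructure.DimLE {X : Type} [TopologicalSpace X] (C : CWStructure X) (c : ℕ∞) : Prop :=
  ∀ n : ℕ, c < (n : ℕ∞) → IsEmpty (C.cells n)

/-- A CW-model of the classifying space `BG`: an aspherical path-connected CW-complex with
fundamental group isomorphic to `G`. -/
structure ClassifyingModel (G : Type) [Group G] : Type 1 where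
  space : Type
  [topology : TopologicalSpace space]
  cw : CWStructure space
  pathConnected : PathConnectedSpace space
  basepoint : space
  /-- all higher homotopy groups vanish -/
  aspherical : ∀ n : ℕ, 2 ≤ n → Subsingleton (HomotopyGroup.Pi n space basepoint)
  iso : FundamentalGroup space basepoint ≃* G

attribute [instance] ClassifyingModel.topology

/-- The geometric dimension of `G`: the infimum of the dimensions of CW-models of `BG`. -/
def gd (G : Type) [Group G] : ℕ∞ :=
  sInf {c : ℕ∞ | ∃ Y : ClassifyingModel G, Y.cw.DimLE c}

attribute [local instance] Path.Homotopic.setoid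

/-- The element of the fundamental group determined by a homotopy class of loops. -/
def pathToPi1 {Y : Type} [TopologicalSpace Y] {y : Y} (p : Path.Homotopic.Quotient y y) :
    FundamentalGroup Y y :=
  FundamentalGroup.fromPath (X := TopCat.of Y) p

/-- A left-invariant finitely additive probability measure defined on all subsets of `G`. -/
structure InvariantMean (G : Type) [Group G] where
  meas : Set G → ℝ
  nonneg : ∀ A : Set G, 0 ≤ meas A
  total : meas Set.univ = 1
  additive : ∀ A B : Set G, Disjoint A B → meas (A ∪ B) = meas A + meas B
  invariant : ∀ (g : G) (A : Set G), meas ((g * ·) '' A) = meas A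

/-- A group is amenable if it admits a left-invariant mean. -/
def IsAmenable (G : Type) [Group G] : Prop := Nonempty (InvariantMean G)

/-- The condition on a member `U` of an amenable open cover: for every `y ∈ U`, the image of
`π₁(U, y) → π₁(Y, y)` is contained in an amenable subgroup. -/
def AmenableCoverCondition {Y : Type} [TopologicalSpace Y] (U : Set Y) : Prop :=
  ∀ y ∈ U, ∃ H : Subgroup (FundamentalGroup Y y), IsAmenable H ∧
    ∀ p : Path y y, (∀ t, p t ∈ U) → pathToPi1 ⟦p⟧ ∈ H

/-- The amenable category `cat_Am(Y)` of a space `Y`: the infimum of all `n` such that `Y`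
admits a cover by `n + 1` amenable open subsets. -/
def amCat (Y : Type) [TopologicalSpace Y] : ℕ∞ :=
  sInf {c : ℕ∞ | ∃ n : ℕ, c = (n : ℕ∞) ∧ ∃ U : Fin (n + 1) → Set Y,
    (∀ i, IsOpen (U i)) ∧ (∀ y : Y, ∃ i, y ∈ U i) ∧ ∀ i, AmenableCoverCondition (U i)}

/-- The amenable category of a group: `cat_Am(G) := cat_Am(BG)`. -/
def amCatGroup (G : Type) [Group G] : ℕ∞ :=
  sInf {c : ℕ∞ | ∃ Y : ClassifyingModel G, c = amCat Y.space}

/-- A subspace `S ⊆ X` is `π₁`-injective if for every basepoint in `S` the inclusion induces an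
injective map on fundamental groups, i.e. loops in `S` that are homotopic in `X` are already
homotopic in `S`. -/
def Pi1Injective {X : Type} [TopologicalSpace X] (S : Set X) : Prop :=
  ∀ (x : S) (p q : Path x x),
    (p.map continuous_subtype_val).Homotopic (q.map continuous_subtype_val) → p.Homotopic q

/-- The image of `π₁(S, x) → π₁(X, x)` (as a subset of the fundamental group of `X`). -/
def loopImageSet {X : Type} [TopologicalSpace X] (S : Set X) (x : X) :
    Set (FundamentalGroup X x) :=
  {g | ∃ p : Path x x, (∀ t, p t ∈ S) ∧ g = pathToPi1 ⟦p⟧}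

/-- The standard topological `n`-simplex. -/
def TopSimplex (n : ℕ) : Set (Fin (n + 1) → ℝ) := stdSimplex ℝ (Fin (n + 1))

/-- Singular `n`-chains on `X` with coefficients in `R`: finitely supported functions on the
set of singular `n`-simplices. -/
abbrev SingularChain (R : Type) [CommRing R] (X : Type) [TopologicalSpace X] (n : ℕ) :=
  C(TopSimplex n, X) →₀ R

/-- The `i`-th face inclusion of standard simplices. -/
def faceMap (n : ℕ) (i : Fin (n + 2)) : C(TopSimplex n, TopSimplex (n + 1)) where
  toFun x := ⟨fun j => ∑ k : Fin (n + 1), if i.succAbove k = j then (x : Fin (n + 1) → ℝ) k else 0,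
    by
      refine ⟨fun j => Finset.sum_nonneg fun k _ => ?_, ?_⟩
      · by_cases h : i.succAbove k = j
        · simpa [h] using x.2.1 k
        · simp [h]
      · rw [Finset.sum_comm]
        simp only [Finset.sum_ite_eq, Finset.mem_univ, if_true]
        exact x.2.2⟩
  continuous_toFun := by
    apply Continuous.subtype_mk
    apply continuous_pi
    intro j
    apply continuous_finset_sum
    intro k _
    by_cases h : i.succAbove k = j
    · simp only [h, if_true]
      exact (continuous_apply k).comp continuous_subtype_val
    · simpa [h] using continuous_const

variable {R : Type} [CommRing R] {X Y : Type} [TopologicalSpace X] [TopologicalSpace Y]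

/-- The boundary operator on singular chains. -/
def chainBoundary {n : ℕ} (c : SingularChain R X (n + 1)) : SingularChain R X n :=
  c.sum fun σ r =>
    ∑ i : Fin (n + 2), (r * (-1) ^ (i : ℕ)) • Finsupp.single (σ.comp (faceMap n i)) (1 : R)

/-- The boundary operator, lowering the degree by one (with `∂ = 0` in degree `0`). -/
def chainBoundaryFrom : ∀ n, SingularChain R X n → SingularChain R X (n - 1)
  | 0, _ => 0
  | _ + 1, c => chainBoundary c

/-- The pushforward of singular chains along a continuous map. -/
def chainMap (f : C(X, Y)) {n : ℕ} (c : SingularChain R X n) : SingularChain R Y n :=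
  c.sum fun σ r => Finsupp.single (f.comp σ) r

/-- The inclusion of a subspace as a continuous map. -/
def subInc {X : Type} [TopologicalSpace X] (A : Set X) : C(A, X) :=
  ⟨Subtype.val, continuous_subtype_val⟩

/-- The chains on `X` supported on the subspace `A`. -/
def chainsOn (A : Set X) (n : ℕ) : Set (SingularChain R X n) :=
  Set.range fun c : SingularChain R A n => chainMap (subInc A) c

/-- A relative `n`-cycle of `(X, A)`. -/
def IsRelCycle (A : Set X) : ∀ n, SingularChain R X n → Prop
  | 0, _ => True
  | n + 1, c => chainBoundary c ∈ chainsOn A n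

/-- Two relative `n`-cycles define the same class in `H_n(X, A; R)`. -/
def RelHomologous (A : Set X) (n : ℕ) (c d : SingularChain R X n) : Prop :=
  ∃ b : SingularChain R X (n + 1), ∃ a ∈ chainsOn (R := R) A n, c - d = chainBoundary b + a

/-- The `ℓ¹`-norm `|c|₁ = ∑_σ |a_σ|` of a real singular chain `c = ∑_σ a_σ · σ`. -/
def chainNorm {n : ℕ} (c : SingularChain ℝ X n) : ℝ :=
  c.sum fun _ r => |r|

/-- Extension of coefficients `ℤ → ℝ` on singular chains. -/
def chainExt {n : ℕ} (c : SingularChain ℤ X n) : SingularChain ℝ X n :=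
  Finsupp.mapRange (fun k : ℤ => (k : ℝ)) (by norm_num) c

/-- The halfspace `{x : ℝⁿ | x₀ ≥ 0}` (all of `ℝ⁰` for `n = 0`). -/
def HalfSpace (n : ℕ) : Set (Fin n → ℝ) := {x | ∀ h : 0 < n, 0 ≤ x ⟨0, h⟩}

/-- The boundary `{x₀ = 0}` of the halfspace. -/
def HalfSpaceBoundary (n : ℕ) : Set (Fin n → ℝ) := {x | ∃ h : 0 < n, x ⟨0, h⟩ = 0}

/-- An oriented compact connected topological `n`-manifold with (possibly empty) boundary.
The orientation is recorded by an integral relative fundamental cycle `fundClass`, i.e. a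
relative cycle whose class generates `H_n(M, ∂M; ℤ) ≅ ℤ` (for a compact connected `n`-manifold,
such a generator exists if and only if the manifold is orientable, and the choice of generator
is exactly the choice of orientation). -/
structure OCCManifold (n : ℕ) : Type 1 where
  carrier : Type
  [topology : TopologicalSpace carrier]
  boundary : Set carrier
  t2 : T2Space carrier
  compact : CompactSpace carrier
  connected : ConnectedSpace carrier
  /-- every point has a halfspace chart, which detects the boundary -/
  charts : ∀ x : carrier, ∃ (U : Set carrier) (V : Set (HalfSpace n)) (φ : U ≃ₜ V),
    x ∈ U ∧ IsOpen U ∧ IsOpen V ∧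
    ∀ y : U, ((y : carrier) ∈ boundary ↔
      ((φ y : HalfSpace n) : Fin n → ℝ) ∈ HalfSpaceBoundary n)
  fundClass : SingularChain ℤ carrier n
  fundClass_cycle : IsRelCycle boundary n fundClass
  fundClass_gen : ∀ c : SingularChain ℤ carrier n, IsRelCycle boundary n c →
    ∃ k : ℤ, RelHomologous boundary n c (k • fundClass)
  fundClass_ord : ∀ k : ℤ, RelHomologous boundary n (k • fundClass) 0 → k = 0

attribute [instance] OCCManifold.topology

/-- A real relative fundamental cycle of `(M, ∂M)`: a real relative cycle representing the image
of the integral fundamental class under the change of coefficients `ℤ → ℝ`. -/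
def IsFundamentalCycle {n : ℕ} (M : OCCManifold n) (c : SingularChain ℝ M.carrier n) : Prop :=
  IsRelCycle M.boundary n c ∧ RelHomologous M.boundary n c (chainExt M.fundClass)

/-- The (relative) simplicial volume `‖M, ∂M‖`: the infimum of the `ℓ¹`-norms of the real
relative fundamental cycles of `(M, ∂M)`.  For closed `M` this is the simplicial volume `‖M‖`. -/
def simVol {n : ℕ} (M : OCCManifold n) : ℝ :=
  sInf {r : ℝ | ∃ c : SingularChain ℝ M.carrier n, IsFundamentalCycle M c ∧ r = chainNorm c}

/-- `S` is a boundary component of `M`, i.e. a connected component of `∂M`. -/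
def IsBoundaryComponent {n : ℕ} (M : OCCManifold n) (S : Set M.carrier) : Prop :=
  ∃ x ∈ M.boundary, S = connectedComponentIn M.boundary x

open scoped Classical in
/-- `z` is a fundamental cycle for the induced orientation on the part `S` of the boundary of
`M`: a cycle on `S` which, pushed into `M`, is the part of `∂(fundClass)` supported on `S`. -/
def IsInducedBoundaryCycle {n : ℕ} (M : OCCManifold n) (S : Set M.carrier)
    (z : SingularChain ℤ S (n - 1)) : Prop :=
  IsRelCycle (∅ : Set S) (n - 1) z ∧
    chainMap (subInc S) z =
      (chainBoundaryFrom n M.fundClass).filter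
        (fun σ : C(TopSimplex (n - 1), M.carrier) => ∀ t, σ t ∈ S)

/-- `h` carries the induced orientation of `S ⊆ ∂M` to `sign` times the induced orientation of
`T ⊆ ∂N`: with `sign = 1` this says that `h` is orientation-preserving, and with `sign = -1`
that `h` is orientation-reversing. -/
def OrientationCompatible {n : ℕ} (sign : ℤ) (M N : OCCManifold n)
    {S : Set M.carrier} {T : Set N.carrier} (h : S ≃ₜ T) : Prop :=
  ∀ z w, IsInducedBoundaryCycle M S z → IsInducedBoundaryCycle N T w →
    RelHomologous (∅ : Set T) (n - 1)
      (chainMap ⟨h, h.continuous_toFun⟩ z) (sign • w)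

/-- The setup of Theorem 3.4: oriented compact connected `n`-manifolds `M₁, …, M_k` glued along
pairings `(Sᵢ⁺, Sᵢ⁻)` of boundary components via orientation-reversing homeomorphisms `fᵢ`,
yielding a connected oriented compact `n`-manifold `glued`.  The map from the disjoint union of
the pieces to `glued` is a quotient map that identifies exactly the points related by the
gluing homeomorphisms. -/
structure GluingSetup (n k l : ℕ) : Type 1 where
  pieces : Fin k → OCCManifold n
  jp : Fin l → Fin k
  jm : Fin l → Fin k
  Sp : ∀ i : Fin l, Set (pieces (jp i)).carrier
  Sm : ∀ i : Fin l, Set (pieces (jm i)).carrier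
  Sp_comp : ∀ i, IsBoundaryComponent (pieces (jp i)) (Sp i)
  Sm_comp : ∀ i, IsBoundaryComponent (pieces (jm i)) (Sm i)
  /-- every boundary component occurs at most once among the `Sᵢ^±` -/
  distinct : Function.Injective
    (Sum.elim (fun i : Fin l => (⟨jp i, Sp i⟩ : Σ j : Fin k, Set (pieces j).carrier))
              (fun i : Fin l => (⟨jm i, Sm i⟩ : Σ j : Fin k, Set (pieces j).carrier)))
  glueHomeo : ∀ i : Fin l, Sp i ≃ₜ Sm i
  glue_or_rev : ∀ i, OrientationCompatible (-1) (pieces (jp i)) (pieces (jm i)) (glueHomeo i)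
  glued : OCCManifold n
  emb : ∀ j : Fin k, C((pieces j).carrier, glued.carrier)
  quotient : Topology.IsQuotientMap fun p : Σ j : Fin k, (pieces j).carrier => emb p.1 p.2
  identifications : ∀ a b : Σ j : Fin k, (pieces j).carrier,
    emb a.1 a.2 = emb b.1 b.2 ↔
      Relation.EqvGen (fun p q : Σ j : Fin k, (pieces j).carrier =>
        ∃ (i : Fin l) (x : Sp i),
          p = ⟨jp i, (x : (pieces (jp i)).carrier)⟩ ∧
          q = ⟨jm i, ((glueHomeo i x : Sm i) : (pieces (jm i)).carrier)⟩) a b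
  boundary_eq : glued.boundary =
    {y : glued.carrier | ∃ p : Σ j : Fin k, (pieces j).carrier,
      emb p.1 p.2 = y ∧ p.2 ∈ (pieces p.1).boundary ∧
      ¬ ((∃ (i : Fin l) (x : Sp i), p = ⟨jp i, (x : (pieces (jp i)).carrier)⟩) ∨
         (∃ (i : Fin l) (x : Sm i), p = ⟨jm i, (x : (pieces (jm i)).carrier)⟩))}



theorem amenable_map {G H : Type} [Group G] [Group H] (φ : G →* H) (K : Subgroup G)
    (hK : IsAmenable K) : IsAmenable (K.map φ) := by
  obtain ⟨m⟩ := hK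
  let ψ : K →* K.map φ := φ.subgroupMap K
  have hs : Function.Surjective ψ := φ.subgroupMap_surjective K
  refine ⟨⟨fun A => m.meas (ψ ⁻¹' A), fun A => m.nonneg _, by simpa using m.total, ?_, ?_⟩⟩
  · intro A B h
    exact m.additive _ _ (h.preimage ψ)
  · intro g A
    obtain ⟨k, rfl⟩ := hs g
    rw [← m.invariant k (ψ ⁻¹' A)]
    congr 1
    ext x
    constructor
    · rintro ⟨a, ha, h⟩
      refine ⟨k⁻¹ * x, ?_, by simp⟩
      have : ψ (k⁻¹ * x) = a := by
        rw [map_mul, ← h]; simp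
      simpa [this] using ha
    · rintro ⟨a, ha, rfl⟩
      exact ⟨ψ a, ha, by simp⟩

theorem amenableCond_of_data {Y : Type} [TopologicalSpace Y] (W : Set Y)
    (h : ∀ y ∈ W, ∃ (A : Type) (_ : TopologicalSpace A) (a : A) (f : C(A, Y))
      (K : Subgroup (FundamentalGroup A a)) (c : Path y (f a)), IsAmenable K ∧
      ∀ p : Path y y, (∀ t, p t ∈ W) → ∃ p' : Path a a, pathToPi1 ⟦p'⟧ ∈ K ∧
        (p.trans c).Homotopic (c.trans (p'.map f.continuous))) :
    AmenableCoverCondition W := by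
  intro y hy
  obtain ⟨A, _, a, f, K, c, hK, hp⟩ := h y hy
  let φ : FundamentalGroup A a →* FundamentalGroup Y y :=
    (FundamentalGroup.fundamentalGroupMulEquivOfPath c).symm.toMonoidHom.comp
      (FundamentalGroup.map f a)
  refine ⟨K.map φ, amenable_map φ K hK, fun p hpW => ?_⟩
  obtain ⟨p', hp'K, hhom⟩ := hp p hpW
  refine ⟨_, hp'K, ?_⟩
  change (FundamentalGroup.fundamentalGroupMulEquivOfPath c).symm
    (FundamentalGroup.map f a (pathToPi1 ⟦p'⟧)) = _
  rw [MulEquiv.symm_apply_eq]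
  unfold FundamentalGroup.fundamentalGroupMulEquivOfPath
  rw [Iso.conj_apply]
  symm
  rw [Iso.inv_comp_eq]
  exact Quotient.sound hhom

/-- A finite indexed amenable cover bounds the amenable category. -/
theorem amCat_le_of_cover {Y : Type} [TopologicalSpace Y] {ι : Type} [Fintype ι] (N : ℕ)
    (hN : Fintype.card ι = N + 1) (U : ι → Set Y) (ho : ∀ i, IsOpen (U i))
    (hc : ∀ y, ∃ i, y ∈ U i) (ha : ∀ i, AmenableCoverCondition (U i)) : amCat Y ≤ N := by
  apply sInf_le
  let e : Fin (N + 1) ≃ ι := (Fintype.equivFinOfCardEq hN).symm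
  refine ⟨N, rfl, fun i => U (e i), fun i => ho _, fun y => ?_, fun i => ha _⟩
  obtain ⟨i, hi⟩ := hc y
  exact ⟨e.symm i, by simpa using hi⟩

theorem exists_cover_of_amCat_le {Y : Type} [TopologicalSpace Y] (N : ℕ)
    (h : amCat Y + 1 ≤ (N : ℕ∞)) : ∃ U : Fin N → Set Y, (∀ i, IsOpen (U i)) ∧
      (∀ y, ∃ i, y ∈ U i) ∧ ∀ i, AmenableCoverCondition (U i) := by
  have hne : {c : ℕ∞ | ∃ n : ℕ, c = (n : ℕ∞) ∧ ∃ U : Fin (n + 1) → Set Y,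
    (∀ i, IsOpen (U i)) ∧ (∀ y : Y, ∃ i, y ∈ U i) ∧ ∀ i, AmenableCoverCondition (U i)}.Nonempty := by
    by_contra hne
    rw [Set.not_nonempty_iff_eq_empty] at hne
    have : amCat Y = ⊤ := by unfold amCat; rw [hne]; exact sInf_empty
    rw [this] at h
    simp at h
  obtain ⟨n, hn, U, h1, h2, h3⟩ := csInf_mem hne
  change amCat Y = n at hn
  rw [hn] at h
  have hnN : n + 1 ≤ N := by exact_mod_cast h
  refine ⟨fun i => if hi : (i : ℕ) < n + 1 then U ⟨i, hi⟩ else ∅, fun i => ?_, fun y => ?_, fun i => ?_⟩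
  · dsimp only; split_ifs
    · exact h1 _
    · exact isOpen_empty
  · obtain ⟨i, hi⟩ := h2 y
    exact ⟨⟨i, by omega⟩, by simpa using ⟨by omega, hi⟩⟩
  · dsimp only; split_ifs
    · exact h3 _
    · intro y hy; exact absurd hy (Set.notMem_empty y)

theorem isClosed_halfSpaceBoundary (n : ℕ) : IsClosed (HalfSpaceBoundary n) := by
  by_cases h : 0 < n
  · have : HalfSpaceBoundary n = {x | x ⟨0, h⟩ = 0} := by
      ext x; exact ⟨fun ⟨_, hx⟩ => hx, fun hx => ⟨h, hx⟩⟩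
    rw [this]
    exact isClosed_eq (continuous_apply _) continuous_const
  · have : HalfSpaceBoundary n = ∅ := by
      ext x; exact ⟨fun ⟨h', _⟩ => absurd h' h, fun hx => absurd hx (Set.notMem_empty x)⟩
    rw [this]
    exact isClosed_empty

theorem isClosed_halfSpace (n : ℕ) : IsClosed (HalfSpace n) := by
  unfold HalfSpace
  rw [Set.setOf_forall]
  exact isClosed_iInter fun h => isClosed_le continuous_const (continuous_apply _)

theorem isClosed_boundary {n : ℕ} (N : OCCManifold n) : IsClosed N.boundary := by
  rw [← isOpen_compl_iff, isOpen_iff_mem_nhds]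
  intro x hx
  obtain ⟨U, V, φ, hxU, hU, hV, hb⟩ := N.charts x
  have ho : IsOpen {u : U | ((φ u : HalfSpace n) : Fin n → ℝ) ∉ HalfSpaceBoundary n} :=
    (isClosed_halfSpaceBoundary n).isOpen_compl.preimage
      (continuous_subtype_val.comp (continuous_subtype_val.comp φ.continuous))
  have := hU.isOpenMap_subtype_val _ ho
  refine Filter.mem_of_superset (this.mem_nhds ⟨⟨x, hxU⟩, fun h => hx ((hb _).2 h), rfl⟩) ?_
  rintro _ ⟨u, hu, rfl⟩ h
  exact hu ((hb _).1 h)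

theorem isClosed_component {n : ℕ} (N : OCCManifold n) (S : Set N.carrier)
    (hS : IsBoundaryComponent N S) : IsClosed S := by
  obtain ⟨x, hx, rfl⟩ := hS
  rw [connectedComponentIn_eq_image hx]
  exact (isClosed_boundary N).isClosedEmbedding_subtypeVal.isClosedMap _ isClosed_connectedComponent

theorem component_eventually {n : ℕ} (N : OCCManifold n) (S : Set N.carrier)
    (hS : IsBoundaryComponent N S) (x : N.carrier) (hx : x ∈ S) :
    ∀ᶠ y in 𝓝 x, y ∈ N.boundary → y ∈ S := by
  obtain ⟨z, hz, rfl⟩ := hS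
  have hxb : x ∈ N.boundary := connectedComponentIn_subset _ _ hx
  rw [connectedComponentIn_eq hx]
  obtain ⟨U, V, φ, hxU, hU, hV, hb⟩ := N.charts x
  obtain ⟨hn, hx0⟩ := (hb ⟨x, hxU⟩).1 hxb
  obtain ⟨ε, hε, hball⟩ := Metric.isOpen_iff.1 hV _ (φ ⟨x, hxU⟩).2
  set v : Fin n → ℝ := ((φ ⟨x, hxU⟩ : HalfSpace n) : Fin n → ℝ) with hv
  let D : Set (Fin n → ℝ) := Metric.ball v ε ∩ {w | w ⟨0, hn⟩ = 0}
  have hDc : Convex ℝ D := by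
    refine (convex_ball v ε).inter ?_
    intro a ha b hb s t _ _ _
    simp only [Set.mem_setOf_eq] at *
    simp [ha, hb]
  have hDH : ∀ w : D, (w : Fin n → ℝ) ∈ HalfSpace n := fun w h => le_of_eq w.2.2.symm
  have hDV : ∀ w : D, (⟨w, hDH w⟩ : HalfSpace n) ∈ V := fun w => hball w.2.1
  let g : D → N.carrier := fun w => (φ.symm ⟨⟨w, hDH w⟩, hDV w⟩ : U)
  have hg : Continuous g := continuous_subtype_val.comp (φ.symm.continuous.comp
    ((continuous_subtype_val.subtype_mk _).subtype_mk _))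
  haveI : PreconnectedSpace D := Subtype.preconnectedSpace hDc.isPreconnected
  have hgp : IsPreconnected (Set.range g) := isPreconnected_range hg
  have hgb : Set.range g ⊆ N.boundary := by
    rintro _ ⟨w, rfl⟩
    rw [hb]
    simp only [Homeomorph.apply_symm_apply]
    exact ⟨hn, w.2.2⟩
  have hxg : x ∈ Set.range g := by
    refine ⟨⟨v, Metric.mem_ball_self hε, hx0⟩, ?_⟩
    simp [g, v]
  have hsub := hgp.subset_connectedComponentIn hxg hgb
  have ho : IsOpen {u : U | dist ((φ u : HalfSpace n) : Fin n → ℝ) v < ε} :=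
    isOpen_lt ((continuous_subtype_val.comp (continuous_subtype_val.comp φ.continuous)).dist
      continuous_const) continuous_const
  have ho' := hU.isOpenMap_subtype_val _ ho
  refine Filter.mem_of_superset (ho'.mem_nhds ⟨⟨x, hxU⟩, by simpa [v] using hε, rfl⟩) ?_
  rintro _ ⟨u, hu, rfl⟩ hub
  apply hsub
  obtain ⟨_, hu0⟩ := (hb u).1 hub
  refine ⟨⟨_, hu, hu0⟩, ?_⟩
  simp [g]

/-- push towards the boundary in the halfspace -/
def pushMap {n : ℕ} (hn : 0 < n) (v : Fin n → ℝ) (r : ℝ) (w : Fin n → ℝ) (t : ℝ) : Fin n → ℝ :=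
  Function.update w ⟨0, hn⟩ (max 0 (w ⟨0, hn⟩ - t * max 0 (r - dist w v)))

theorem pushMap_dist {n : ℕ} (hn : 0 < n) (v : Fin n → ℝ) (hv : v ⟨0, hn⟩ = 0) (r : ℝ)
    (w : Fin n → ℝ) (hw : 0 ≤ w ⟨0, hn⟩) (t : ℝ) (ht : 0 ≤ t) :
    dist (pushMap hn v r w t) v ≤ dist w v := by
  rw [dist_pi_le_iff dist_nonneg]
  intro i
  by_cases hi : i = ⟨0, hn⟩
  · subst hi
    refine le_trans ?_ (dist_le_pi_dist w v ⟨0, hn⟩)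
    simp only [pushMap, Function.update_self, hv, Real.dist_eq, sub_zero]
    rw [abs_of_nonneg (le_max_left _ _), abs_of_nonneg hw]
    apply max_le hw
    have : 0 ≤ t * max 0 (r - dist w v) := mul_nonneg ht (le_max_left _ _)
    linarith
  · simp only [pushMap, Function.update_of_ne hi]
    exact dist_le_pi_dist w v i

theorem pushMap_eq {n : ℕ} (hn : 0 < n) (v : Fin n → ℝ) (r : ℝ)
    (w : Fin n → ℝ) (hw : 0 ≤ w ⟨0, hn⟩) (t : ℝ) (h : t * max 0 (r - dist w v) = 0) :
    pushMap hn v r w t = w := by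
  simp [pushMap, h, hw]

theorem exists_local_push {n : ℕ} (N : OCCManifold n) (x : N.carrier) (hx : x ∈ N.boundary) :
    ∃ h : N.carrier × unitInterval → N.carrier, Continuous h ∧ (∀ y, h (y, 0) = y) ∧
      (∀ y ∈ N.boundary, ∀ t, h (y, t) = y) ∧ ∀ᶠ y in 𝓝 x, h (y, 1) ∈ N.boundary := by
  classical
  haveI := N.t2
  obtain ⟨U, V, φ, hxU, hU, hV, hb⟩ := N.charts x
  obtain ⟨hn, hx0⟩ := (hb ⟨x, hxU⟩).1 hx
  obtain ⟨ε, hε, hball⟩ := Metric.isOpen_iff.1 hV _ (φ ⟨x, hxU⟩).2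
  set v : Fin n → ℝ := ((φ ⟨x, hxU⟩ : HalfSpace n) : Fin n → ℝ) with hv
  obtain ⟨r, hr, hrε⟩ : ∃ r, 0 < r ∧ r < ε := ⟨ε / 2, by linarith, by linarith⟩
  have hPH : ∀ (w : Fin n → ℝ) (t : ℝ), w ∈ HalfSpace n → pushMap hn v r w t ∈ HalfSpace n := by
    intro w t hw h
    simp [pushMap]
  have hPV : ∀ (w : V) (t : unitInterval),
      (⟨pushMap hn v r w t, hPH _ t w.1.2⟩ : HalfSpace n) ∈ V := by
    intro w t
    by_cases hd : dist ((w : HalfSpace n) : Fin n → ℝ) v ≤ r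
    · apply hball
      exact lt_of_le_of_lt (pushMap_dist hn v hx0 r w (w.1.2 hn) t t.2.1) (by linarith)
    · have : pushMap hn v r w t = w := by
        apply pushMap_eq hn v r w (w.1.2 hn)
        rw [max_eq_left (by linarith), mul_zero]
      convert w.2
  let g : U × unitInterval → N.carrier := fun p =>
    (φ.symm ⟨⟨pushMap hn v r (φ p.1 : HalfSpace n) p.2, hPH _ _ (φ p.1).1.2⟩, hPV _ _⟩ : U)
  have hφ : Continuous fun u : U => ((φ u : HalfSpace n) : Fin n → ℝ) :=
    continuous_subtype_val.comp (continuous_subtype_val.comp φ.continuous)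
  have hpc : Continuous fun p : U × unitInterval =>
      pushMap hn v r (φ p.1 : HalfSpace n) (p.2 : ℝ) := by
    unfold pushMap
    have h1 : Continuous fun p : U × unitInterval => ((φ p.1 : HalfSpace n) : Fin n → ℝ) :=
      hφ.comp continuous_fst
    have h2 : Continuous fun p : U × unitInterval => (p.2 : ℝ) :=
      continuous_subtype_val.comp continuous_snd
    refine h1.update _ ?_
    exact continuous_const.max (((continuous_apply _).comp h1).sub
      (h2.mul (continuous_const.max (continuous_const.sub (h1.dist continuous_const)))))
  have hg : Continuous g := continuous_subtype_val.comp (φ.symm.continuous.comp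
    ((hpc.subtype_mk _).subtype_mk _))
  let h : N.carrier × unitInterval → N.carrier := fun p =>
    if hp : p.1 ∈ U then g (⟨p.1, hp⟩, p.2) else p.1
  have hhU : ∀ (u : U) t, h (u, t) = g (u, t) := fun u t => by simp [h]
  have hgfix : ∀ (u : U) (t : unitInterval),
      (t : ℝ) * max 0 (r - dist ((φ u : HalfSpace n) : Fin n → ℝ) v) = 0 → g (u, t) = u := by
    intro u t hut
    have := pushMap_eq hn v r _ ((φ u).1.2 hn) t hut
    simp only [g]
    simp only [this]
    simp
  -- the compact support
  let B : Set (HalfSpace n) := {w | dist (w : Fin n → ℝ) v ≤ r}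
  have hBV : ∀ w : B, (w : HalfSpace n) ∈ V := fun w => hball (lt_of_le_of_lt w.2 hrε)
  have hBc : IsCompact B := by
    have : B = Subtype.val ⁻¹' (Metric.closedBall v r) := rfl
    rw [this]
    exact (isClosed_halfSpace n).isClosedEmbedding_subtypeVal.isCompact_preimage
      (isCompact_closedBall v r)
  haveI : CompactSpace B := isCompact_iff_compactSpace.1 hBc
  let κ : B → N.carrier := fun w => (φ.symm ⟨w, hBV w⟩ : U)
  have hκ : Continuous κ := continuous_subtype_val.comp (φ.symm.continuous.comp
    (continuous_subtype_val.subtype_mk _))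
  have hK : IsClosed (Set.range κ) := (isCompact_range hκ).isClosed
  have hout : ∀ y t, y ∉ Set.range κ → h (y, t) = y := by
    intro y t hy
    by_cases hyU : y ∈ U
    · rw [hhU ⟨y, hyU⟩ t]
      apply hgfix
      rw [max_eq_left, mul_zero]
      by_contra hlt
      apply hy
      refine ⟨⟨(φ ⟨y, hyU⟩).1, ?_⟩, by simp [κ]⟩
      simp only [B, Set.mem_setOf_eq]
      linarith
    · simp [h, hyU]
  refine ⟨h, ?_, ?_, ?_, ?_⟩
  · rw [continuous_iff_continuousAt]
    rintro ⟨y, t⟩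
    by_cases hyU : y ∈ U
    · have hoe : Topology.IsOpenEmbedding (Prod.map Subtype.val id : U × unitInterval → _) :=
        hU.isOpenEmbedding_subtypeVal.prodMap Topology.IsOpenEmbedding.id
      have := (hoe.continuousAt_iff (g := h) (x := (⟨y, hyU⟩, t))).1
      apply this
      have he : h ∘ (Prod.map Subtype.val id : U × unitInterval → _) = g := by
        funext p; exact hhU p.1 p.2
      rw [he]
      exact hg.continuousAt
    · have hyK : y ∉ Set.range κ := by
        rintro ⟨w, rfl⟩
        exact hyU (Subtype.coe_prop _)
      have : h =ᶠ[𝓝 (y, t)] Prod.fst := by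
        have hm : (Set.range κ)ᶜ ×ˢ (Set.univ : Set unitInterval) ∈ 𝓝 (y, t) :=
          (hK.isOpen_compl.prod isOpen_univ).mem_nhds ⟨hyK, trivial⟩
        filter_upwards [hm] with p hp
        exact hout p.1 p.2 hp.1
      exact continuous_fst.continuousAt.congr this.symm
  · intro y
    by_cases hyU : y ∈ U
    · rw [hhU ⟨y, hyU⟩ 0]
      exact hgfix _ _ (by simp)
    · simp [h, hyU]
  · intro y hy t
    by_cases hyU : y ∈ U
    · rw [hhU ⟨y, hyU⟩ t]
      obtain ⟨_, hy0⟩ := (hb ⟨y, hyU⟩).1 hy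
      have : pushMap hn v r (φ ⟨y, hyU⟩ : HalfSpace n) t = (φ ⟨y, hyU⟩ : HalfSpace n) := by
        unfold pushMap
        rw [Function.update_eq_self_iff, hy0]
        apply max_eq_left
        have : 0 ≤ (t : ℝ) * max 0 (r - dist ((φ ⟨y, hyU⟩ : HalfSpace n) : Fin n → ℝ) v) :=
          mul_nonneg t.2.1 (le_max_left _ _)
        linarith
      simp only [g]
      simp only [this]
      simp
    · simp [h, hyU]
  · have ho : IsOpen {u : U | dist ((φ u : HalfSpace n) : Fin n → ℝ) v < r / 2} :=
      isOpen_lt (hφ.dist continuous_const) continuous_const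
    have ho' := hU.isOpenMap_subtype_val _ ho
    refine Filter.mem_of_superset (ho'.mem_nhds ⟨⟨x, hxU⟩, by simpa [v] using hr, rfl⟩) ?_
    rintro _ ⟨u, hu, rfl⟩
    change h (u, 1) ∈ N.boundary
    rw [hhU]
    simp only [g]
    rw [hb]
    simp only [Homeomorph.apply_symm_apply]
    refine ⟨hn, ?_⟩
    simp only [pushMap, Function.update_self]
    apply max_eq_left
    simp only [Set.mem_setOf_eq] at hu
    have h1 := dist_le_pi_dist ((φ u : HalfSpace n) : Fin n → ℝ) v ⟨0, hn⟩
    rw [hx0, Real.dist_eq, sub_zero] at h1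
    have h2 := le_abs_self (((φ u : HalfSpace n) : Fin n → ℝ) ⟨0, hn⟩)
    have h3 := le_max_right 0 (r - dist ((φ u : HalfSpace n) : Fin n → ℝ) v)
    have h4 : ((1 : unitInterval) : ℝ) = 1 := rfl
    rw [h4, one_mul]
    linarith

theorem exists_push {n : ℕ} (N : OCCManifold n) :
    ∃ h : N.carrier × unitInterval → N.carrier, Continuous h ∧ (∀ y, h (y, 0) = y) ∧
      (∀ y ∈ N.boundary, ∀ t, h (y, t) = y) ∧
      ∀ x ∈ N.boundary, ∀ᶠ y in 𝓝 x, h (y, 1) ∈ N.boundary := by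
  haveI := N.compact
  have key : ∃ h : N.carrier × unitInterval → N.carrier, Continuous h ∧ (∀ y, h (y, 0) = y) ∧
      (∀ y ∈ N.boundary, ∀ t, h (y, t) = y) ∧
      ∀ x ∈ N.boundary, x ∈ N.boundary → ∀ᶠ y in 𝓝 x, h (y, 1) ∈ N.boundary := by
    refine (isClosed_boundary N).isCompact.induction_on (p := fun A =>
      ∃ h : N.carrier × unitInterval → N.carrier, Continuous h ∧ (∀ y, h (y, 0) = y) ∧
      (∀ y ∈ N.boundary, ∀ t, h (y, t) = y) ∧
      ∀ x ∈ A, x ∈ N.boundary → ∀ᶠ y in 𝓝 x, h (y, 1) ∈ N.boundary) ?_ ?_ ?_ ?_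
    · exact ⟨Prod.fst, continuous_fst, fun _ => rfl, fun _ _ _ => rfl,
        fun x hx => absurd hx (Set.notMem_empty x)⟩
    · rintro A B hAB ⟨h, h1, h2, h3, h4⟩
      exact ⟨h, h1, h2, h3, fun x hx => h4 x (hAB hx)⟩
    · rintro A B ⟨h, h1, h2, h3, h4⟩ ⟨h', h1', h2', h3', h4'⟩
      refine ⟨fun p => h' (h p, p.2), h1'.comp (h1.prodMk continuous_snd), fun y => ?_,
        fun y hy t => ?_, fun x hx hxb => ?_⟩
      · simp [h2, h2']
      · simp [h3 y hy, h3' y hy]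
      · rcases hx with hx | hx
        · filter_upwards [h4 x hx hxb] with y hy
          rw [h3' _ hy]
          exact hy
        · have hc : Continuous fun y => h (y, 1) := h1.comp (by fun_prop)
          have ht : Filter.Tendsto (fun y => h (y, 1)) (𝓝 x) (𝓝 x) := by
            have := hc.tendsto x
            rwa [h3 x hxb] at this
          exact ht.eventually (h4' x hx hxb)
    · intro x hx
      obtain ⟨h, h1, h2, h3, h4⟩ := exists_local_push N x hx
      exact ⟨_, mem_nhdsWithin_of_mem_nhds (eventually_nhds_iff.2 (eventually_nhds_iff.1 h4.eventually_nhds)),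
        h, h1, h2, h3, fun y hy _ => hy⟩
  obtain ⟨h, h1, h2, h3, h4⟩ := key
  exact ⟨h, h1, h2, h3, fun x hx => h4 x hx hx⟩

theorem component_unique {n k : ℕ} (pieces : Fin k → OCCManifold n) {j j' : Fin k}
    {A : Set (pieces j).carrier} {A' : Set (pieces j').carrier}
    (hA : IsBoundaryComponent (pieces j) A) (hA' : IsBoundaryComponent (pieces j') A')
    {s : (pieces j).carrier} {s' : (pieces j').carrier} (hs : s ∈ A) (hs' : s' ∈ A')
    (h : (⟨j, s⟩ : Σ j : Fin k, (pieces j).carrier) = ⟨j', s'⟩) :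
    (⟨j, A⟩ : Σ j : Fin k, Set (pieces j).carrier) = ⟨j', A'⟩ := by
  obtain ⟨rfl, h⟩ := Sigma.mk.inj_iff.1 h
  obtain rfl := eq_of_heq h
  obtain ⟨x, hx, rfl⟩ := hA
  obtain ⟨x', hx', rfl⟩ := hA'
  rw [connectedComponentIn_eq hs, connectedComponentIn_eq hs']

namespace GluingSetup
variable {n k l : ℕ} (S : GluingSetup n k l)

/-- the disjoint union of the pieces -/
abbrev XX := Σ j : Fin k, (S.pieces j).carrier

/-- the quotient map -/
def qq (a : S.XX) : S.glued.carrier := S.emb a.1 a.2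

/-- `a` is one of the two points of the pieces corresponding to `x ∈ Sᵢ⁺`. -/
def Rep (a : S.XX) (z : Σ i : Fin l, S.Sp i) : Prop :=
  a = ⟨S.jp z.1, (z.2 : (S.pieces (S.jp z.1)).carrier)⟩ ∨
  a = ⟨S.jm z.1, (S.glueHomeo z.1 z.2 : (S.pieces (S.jm z.1)).carrier)⟩

theorem rep_unique {a : S.XX} {z z' : Σ i : Fin l, S.Sp i} (h : S.Rep a z) (h' : S.Rep a z') :
    z = z' := by
  obtain ⟨i, x⟩ := z
  obtain ⟨i', x'⟩ := z'
  rcases h with h | h <;> rcases h' with h' | h'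
  · have e := component_unique S.pieces (S.Sp_comp i) (S.Sp_comp i') x.2 x'.2 (h.symm.trans h')
    have := @S.distinct (Sum.inl i) (Sum.inl i') e
    obtain rfl := Sum.inl_injective this
    have e2 := eq_of_heq (Sigma.mk.inj_iff.1 (h.symm.trans h')).2
    have e3 : x = x' := Subtype.ext e2
    rw [e3]
  · have e := component_unique S.pieces (S.Sp_comp i) (S.Sm_comp i') x.2
      (S.glueHomeo i' x').2 (h.symm.trans h')
    have := @S.distinct (Sum.inl i) (Sum.inr i') e
    simp at this
  · have e := component_unique S.pieces (S.Sm_comp i) (S.Sp_comp i')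
      (S.glueHomeo i x).2 x'.2 (h.symm.trans h')
    have := @S.distinct (Sum.inr i) (Sum.inl i') e
    simp at this
  · have e := component_unique S.pieces (S.Sm_comp i) (S.Sm_comp i')
      (S.glueHomeo i x).2 (S.glueHomeo i' x').2 (h.symm.trans h')
    have := @S.distinct (Sum.inr i) (Sum.inr i') e
    obtain rfl := Sum.inr_injective this
    have e2 := eq_of_heq (Sigma.mk.inj_iff.1 (h.symm.trans h')).2
    have e3 : x = x' := (S.glueHomeo i).injective (Subtype.ext e2)
    rw [e3]

theorem qq_eq {a b : S.XX} (h : S.qq a = S.qq b) : a = b ∨ ∃ z, S.Rep a z ∧ S.Rep b z := by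
  replace h := (S.identifications a b).1 h
  induction h with
  | rel a b h =>
    obtain ⟨i, x, rfl, rfl⟩ := h
    exact Or.inr ⟨⟨i, x⟩, Or.inl rfl, Or.inr rfl⟩
  | refl a => exact Or.inl rfl
  | symm a b _ ih =>
    rcases ih with h | ⟨z, h1, h2⟩
    · exact Or.inl h.symm
    · exact Or.inr ⟨z, h2, h1⟩
  | trans a b c _ _ ih1 ih2 =>
    rcases ih1 with rfl | ⟨z, h1, h2⟩
    · exact ih2
    · rcases ih2 with rfl | ⟨z', hb1, hb2⟩
      · exact Or.inr ⟨z, h1, h2⟩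
      · obtain rfl := S.rep_unique h2 hb1
        exact Or.inr ⟨z, h1, hb2⟩

/-- the glued hypersurfaces as a subspace of `glued` -/
def EE (z : Σ i : Fin l, S.Sp i) : S.glued.carrier := S.emb (S.jp z.1) z.2

theorem qq_rep {a : S.XX} {z} (h : S.Rep a z) : S.qq a = S.EE z := by
  refine (S.identifications a ⟨S.jp z.1, z.2⟩).2 ?_
  rcases h with rfl | rfl
  · exact Relation.EqvGen.refl _
  · exact Relation.EqvGen.symm _ _ (Relation.EqvGen.rel _ _ ⟨z.1, z.2, rfl, rfl⟩)

/-- the glued points in the disjoint union -/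
def TT : Set S.XX := {a | ∃ z, S.Rep a z}

theorem qq_inj {a b : S.XX} (ha : a ∉ S.TT) (h : S.qq a = S.qq b) : a = b := by
  rcases S.qq_eq h with h | ⟨z, hz, _⟩
  · exact h
  · exact absurd ⟨z, hz⟩ ha

theorem TT_boundary {a : S.XX} (ha : a ∈ S.TT) : a.2 ∈ (S.pieces a.1).boundary := by
  obtain ⟨⟨i, x⟩, rfl | rfl⟩ := ha
  · obtain ⟨y, hy, he⟩ := S.Sp_comp i
    have := x.2
    apply connectedComponentIn_subset _ y
    rw [← he]
    exact this
  · obtain ⟨y, hy, he⟩ := S.Sm_comp i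
    have := (S.glueHomeo i x).2
    apply connectedComponentIn_subset _ y
    rw [← he]
    exact this

theorem mem_TT_of_Sp {i : Fin l} {y : (S.pieces (S.jp i)).carrier} (hy : y ∈ S.Sp i) :
    (⟨S.jp i, y⟩ : S.XX) ∈ S.TT := ⟨⟨i, ⟨y, hy⟩⟩, Or.inl rfl⟩

theorem mem_TT_of_Sm {i : Fin l} {y : (S.pieces (S.jm i)).carrier} (hy : y ∈ S.Sm i) :
    (⟨S.jm i, y⟩ : S.XX) ∈ S.TT :=
  ⟨⟨i, (S.glueHomeo i).symm ⟨y, hy⟩⟩, Or.inr (by simp)⟩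

theorem TT_eventually {a : S.XX} (ha : a ∈ S.TT) :
    ∀ᶠ y in 𝓝 a.2, y ∈ (S.pieces a.1).boundary → (⟨a.1, y⟩ : S.XX) ∈ S.TT := by
  obtain ⟨⟨i, x⟩, rfl | rfl⟩ := ha
  · filter_upwards [component_eventually _ _ (S.Sp_comp i) x x.2] with y hy hyb
    exact S.mem_TT_of_Sp (hy hyb)
  · filter_upwards [component_eventually _ _ (S.Sm_comp i) _ (S.glueHomeo i x).2] with y hy hyb
    exact S.mem_TT_of_Sm (hy hyb)

theorem TT_closed : IsClosed S.TT := by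
  have : S.TT = (⋃ i, Sigma.mk (S.jp i) '' (S.Sp i)) ∪ ⋃ i, Sigma.mk (S.jm i) '' (S.Sm i) := by
    ext a
    constructor
    · rintro ⟨⟨i, x⟩, rfl | rfl⟩
      · exact Or.inl (Set.mem_iUnion.2 ⟨i, x, x.2, rfl⟩)
      · exact Or.inr (Set.mem_iUnion.2 ⟨i, _, (S.glueHomeo i x).2, rfl⟩)
    · rintro (h | h)
      · obtain ⟨i, y, hy, rfl⟩ := Set.mem_iUnion.1 h
        exact S.mem_TT_of_Sp hy
      · obtain ⟨i, y, hy, rfl⟩ := Set.mem_iUnion.1 h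
        exact S.mem_TT_of_Sm hy
  rw [this]
  refine (isClosed_iUnion_of_finite fun i => ?_).union (isClosed_iUnion_of_finite fun i => ?_)
  · exact isClosedMap_sigmaMk _ (isClosed_component _ _ (S.Sp_comp i))
  · exact isClosedMap_sigmaMk _ (isClosed_component _ _ (S.Sm_comp i))

theorem qq_continuous : Continuous S.qq := S.quotient.continuous
theorem qq_surjective : Function.Surjective S.qq := S.quotient.surjective

theorem EE_isClosedEmbedding : Topology.IsClosedEmbedding S.EE := by
  haveI : ∀ i, CompactSpace (S.Sp i) := fun i => by
    haveI := (S.pieces (S.jp i)).compact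
    exact isCompact_iff_compactSpace.1 (isClosed_component _ _ (S.Sp_comp i)).isCompact
  haveI := S.glued.t2
  refine Continuous.isClosedEmbedding ?_ ?_
  · rw [continuous_sigma_iff]
    intro i
    exact (S.emb (S.jp i)).continuous.comp continuous_subtype_val
  · intro z z' h
    have h' : S.qq ⟨S.jp z.1, z.2⟩ = S.qq ⟨S.jp z'.1, z'.2⟩ := h
    rcases S.qq_eq h' with h | ⟨w, h1, h2⟩
    · refine S.rep_unique (a := ⟨S.jp z.1, z.2⟩) (Or.inl rfl) ?_
      rw [h]
      exact Or.inl rfl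
    · exact (S.rep_unique (Or.inl rfl) h1).trans (S.rep_unique (Or.inl rfl) h2).symm

/-- Saturated open sets have open image. -/
theorem qq_image_open {O : Set S.XX} (hO : IsOpen O) (hsat : S.TT ⊆ O ∨ Disjoint S.TT O) :
    IsOpen (S.qq '' O) := by
  rw [← S.quotient.isOpen_preimage]
  have : (fun p : S.XX => S.emb p.1 p.2) ⁻¹' (S.qq '' O) = O := by
    ext a
    constructor
    · rintro ⟨b, hb, h⟩
      rcases S.qq_eq h with rfl | ⟨z, h1, h2⟩
      · exact hb
      · rcases hsat with hsat | hsat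
        · exact hsat ⟨z, h2⟩
        · exact absurd hb (Set.disjoint_left.1 hsat ⟨z, h1⟩)
    · intro ha
      exact ⟨a, ha, rfl⟩
  rw [this]
  exact hO

/-- The deformation of `glued` pushing a neighbourhood of the glued hypersurfaces into them. -/
theorem exists_deformation : ∃ (g : C(S.glued.carrier, S.glued.carrier))
    (H : ContinuousMap.Homotopy (ContinuousMap.id _) g) (O : Set S.glued.carrier),
    IsOpen O ∧ Set.range S.EE ⊆ O ∧ (∀ y ∈ O, g y ∈ Set.range S.EE) ∧
    ∀ z, g (S.EE z) = S.EE z := by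
  haveI := fun j => (S.pieces j).compact
  haveI := fun j => (S.pieces j).t2
  haveI := S.glued.t2
  choose h h1 h2 h3 h4 using fun j => exists_push (S.pieces j)
  let Φ : unitInterval × S.XX → S.XX := fun p => ⟨p.2.1, h p.2.1 (p.2.2, p.1)⟩
  have hΦ : Continuous Φ := by
    have hc : Continuous (fun p : S.XX × unitInterval => Φ (p.2, p.1)) := by
      rw [← Homeomorph.sigmaProdDistrib.symm.comp_continuous_iff']
      rw [continuous_sigma_iff]
      intro j
      exact continuous_sigmaMk.comp (h1 j)
    exact hc.comp continuous_swap
  have hΦT : ∀ a ∈ S.TT, ∀ t, Φ (t, a) = a := by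
    rintro ⟨j, x⟩ ha t
    simp only [Φ]
    rw [h3 j x (S.TT_boundary ha)]
  let Q : unitInterval × S.XX → unitInterval × S.glued.carrier := Prod.map id S.qq
  have hQc : Continuous Q := continuous_id.prodMap S.qq_continuous
  have hQs : Function.Surjective Q := Function.surjective_id.prodMap S.qq_surjective
  have hQ : Topology.IsQuotientMap Q := hQc.isClosedMap.isQuotientMap hQc hQs
  let s : S.glued.carrier → S.XX := Function.surjInv S.qq_surjective
  have hs : ∀ y, S.qq (s y) = y := Function.surjInv_eq S.qq_surjective
  let F : unitInterval × S.glued.carrier → S.glued.carrier := fun p => S.qq (Φ (p.1, s p.2))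
  have hF : ∀ t a, F (t, S.qq a) = S.qq (Φ (t, a)) := by
    intro t a
    rcases S.qq_eq (hs (S.qq a)) with h | ⟨z, hz1, hz2⟩
    · simp only [F, h]
    · simp only [F]
      rw [hΦT _ ⟨z, hz1⟩, hΦT _ ⟨z, hz2⟩, hs]
  have hFc : Continuous F := by
    rw [hQ.continuous_iff]
    have : F ∘ Q = S.qq ∘ Φ := by
      funext p; exact hF p.1 p.2
    rw [this]
    exact S.qq_continuous.comp hΦ
  let g : C(S.glued.carrier, S.glued.carrier) := ⟨fun y => F (1, y), hFc.comp (by fun_prop)⟩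
  let H : ContinuousMap.Homotopy (ContinuousMap.id _) g :=
    { toFun := F
      continuous_toFun := hFc
      map_zero_left := by
        intro y
        obtain ⟨a, rfl⟩ := S.qq_surjective y
        rw [hF]
        simp [Φ, h2]
      map_one_left := fun y => rfl }
  let O₀ : Set S.XX := interior {a | Φ (1, a) ∈ S.TT}
  have hO₀ : S.TT ⊆ O₀ := by
    rintro ⟨j, x⟩ ha
    have hb := S.TT_boundary ha
    rw [mem_interior_iff_mem_nhds, Sigma.nhds_mk, Filter.mem_map]
    have hc : Continuous fun y => h j (y, 1) := (h1 j).comp (by fun_prop)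
    have ht : Filter.Tendsto (fun y => h j (y, 1)) (𝓝 x) (𝓝 x) := by
      have := hc.tendsto x
      rwa [h3 j x hb] at this
    filter_upwards [h4 j x hb, ht.eventually (S.TT_eventually ha)] with y hy1 hy2
    exact hy2 hy1
  refine ⟨g, H, S.qq '' O₀, S.qq_image_open isOpen_interior (Or.inl hO₀), ?_, ?_, ?_⟩
  · rintro _ ⟨z, rfl⟩
    exact ⟨⟨S.jp z.1, z.2⟩, hO₀ ⟨z, Or.inl rfl⟩, rfl⟩
  · rintro _ ⟨a, ha, rfl⟩
    have : a ∈ {a | Φ (1, a) ∈ S.TT} := interior_subset ha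
    obtain ⟨z, hz⟩ := this
    refine ⟨z, ?_⟩
    rw [← S.qq_rep hz]
    exact (hF 1 a).symm
  · intro z
    have hz : S.Rep ⟨S.jp z.1, z.2⟩ z := Or.inl rfl
    have := hF 1 ⟨S.jp z.1, z.2⟩
    rw [hΦT _ ⟨z, hz⟩] at this
    exact this

/-- Lifting a path through an embedding of a disjoint union. -/
theorem lift_path {Y Z : Type} [TopologicalSpace Y] [TopologicalSpace Z] {e : Z → Y}
    (he : Topology.IsEmbedding e) (γ : unitInterval → Y) (hγ : Continuous γ)
    (hr : ∀ t, γ t ∈ Set.range e) : ∃ δ : unitInterval → Z, Continuous δ ∧ ∀ t, e (δ t) = γ t := by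
  choose δ hδ using hr
  refine ⟨δ, ?_, hδ⟩
  rw [he.continuous_iff]
  convert hγ using 1
  funext t; exact hδ t

theorem sigma_loop {ι : Type} {A : ι → Type} [∀ i, TopologicalSpace (A i)]
    (δ : unitInterval → Σ i, A i) (hδ : Continuous δ) (i : ι) (x : A i)
    (h0 : δ 0 = ⟨i, x⟩) (h1 : δ 1 = ⟨i, x⟩) :
    ∃ p : Path x x, ∀ t, δ t = ⟨i, p t⟩ := by
  obtain ⟨j, g, hg, rfl⟩ := hδ.exists_lift_sigma
  obtain ⟨rfl, h0'⟩ := Sigma.mk.inj_iff.1 h0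
  obtain ⟨_, h1'⟩ := Sigma.mk.inj_iff.1 h1
  exact ⟨⟨⟨g, hg⟩, eq_of_heq h0', eq_of_heq h1'⟩, fun t => rfl⟩

theorem homotopic_conj {Y : Type} [TopologicalSpace Y] {g : C(Y, Y)}
    (H : ContinuousMap.Homotopy (ContinuousMap.id Y) g) {y w : Y} (hw : w = g y)
    (p : Path y y) (q : Path w w) (hq : ∀ t, q t = g (p t)) :
    (p.trans ((H.evalAt y).cast rfl hw)).Homotopic (((H.evalAt y).cast rfl hw).trans q) := by
  subst hw
  have : q = p.map g.continuous := by
    ext t; exact hq t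
  rw [this]
  exact Path.Homotopic.map_trans_evalAt H p

/-- Open sets away from the hypersurfaces. -/
theorem interior_cond (U : ∀ j, Set (S.pieces j).carrier) (ho : ∀ j, IsOpen (U j))
    (ha : ∀ j, AmenableCoverCondition (U j)) :
    IsOpen (S.qq '' {a | a.2 ∈ U a.1 ∧ a ∉ S.TT}) ∧
    AmenableCoverCondition (S.qq '' {a | a.2 ∈ U a.1 ∧ a ∉ S.TT}) := by
  have hUo : IsOpen {a : S.XX | a.2 ∈ U a.1} := by
    rw [isOpen_sigma_iff]; exact ho
  refine ⟨S.qq_image_open (hUo.inter S.TT_closed.isOpen_compl)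
    (Or.inr (Set.disjoint_left.2 fun a h h' => h'.2 h)), ?_⟩
  have hemb : Topology.IsEmbedding (fun a : (S.TTᶜ : Set S.XX) => S.qq a) := by
    refine (Topology.IsOpenEmbedding.of_continuous_injective_isOpenMap
      (S.qq_continuous.comp continuous_subtype_val) ?_ ?_).isEmbedding
    · intro a b h
      exact Subtype.ext (S.qq_inj a.2 h)
    · intro O hO
      have := S.TT_closed.isOpen_compl.isOpenMap_subtype_val _ hO
      have h2 := S.qq_image_open this (Or.inr (Set.disjoint_left.2 (by
        rintro a h ⟨b, _, rfl⟩; exact b.2 h)))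
      rwa [Set.image_image] at h2
  apply amenableCond_of_data
  rintro _ ⟨⟨j, x⟩, ⟨hx, hxT⟩, rfl⟩
  obtain ⟨K, hK, hKp⟩ := ha j x hx
  refine ⟨(S.pieces j).carrier, inferInstance, x, S.emb j, K, Path.refl _, hK, fun p hp => ?_⟩
  obtain ⟨δ, hδ, hδp⟩ := lift_path hemb p p.continuous (fun t => by
    obtain ⟨a, ha, h⟩ := hp t
    exact ⟨⟨a, ha.2⟩, h⟩)
  have hend : ∀ t, p t = S.qq ⟨j, x⟩ → (δ t : S.XX) = ⟨j, x⟩ := fun t ht =>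
    S.qq_inj (δ t).2 ((hδp t).trans ht)
  obtain ⟨p', hp'⟩ := sigma_loop (fun t => (δ t : S.XX)) (continuous_subtype_val.comp hδ) j x
    (hend 0 p.source) (hend 1 p.target)
  refine ⟨p', hKp p' fun t => ?_, ?_⟩
  · obtain ⟨a, ha, h⟩ := hp t
    have : (δ t : S.XX) = a := S.qq_inj (δ t).2 ((hδp t).trans h.symm)
    rw [← this, hp' t] at ha
    exact ha.1
  · have : p'.map (S.emb j).continuous = p := by
      ext t
      have h := hδp t
      rw [hp' t] at h
      exact h
    rw [this]
    exact Path.Homotopic.trans ⟨Path.Homotopy.transRefl p⟩ ⟨(Path.Homotopy.reflTrans p).symm⟩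

theorem amCat_bound (m s : ℕ) (hm : ∀ j, amCat (S.pieces j).carrier ≤ m)
    (hs : ∀ i, amCat (S.Sp i) + 1 ≤ s) : amCat S.glued.carrier ≤ ((m + s : ℕ) : ℕ∞) := by
  choose U hU1 hU2 hU3 using fun j => exists_cover_of_amCat_le (Y := (S.pieces j).carrier) (m + 1)
    (by push_cast; exact add_le_add_left (hm j) 1)
  choose V hV1 hV2 hV3 using fun i => exists_cover_of_amCat_le (Y := S.Sp i) s (hs i)
  obtain ⟨g, H, O, hO, hTO, hgO, hgE⟩ := S.exists_deformation
  let W : Fin s → Set S.glued.carrier := fun b => O ∩ g ⁻¹' (S.EE '' {z | z.2 ∈ V z.1 b})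
  have hfix : ∀ b, IsOpen (W b) := by
    intro b
    have hVo : IsOpen {z : Σ i : Fin l, S.Sp i | z.2 ∈ V z.1 b} := by
      rw [isOpen_sigma_iff]; exact fun i => hV1 i b
    obtain ⟨O', hO', he⟩ := S.EE_isClosedEmbedding.isInducing.isOpen_iff.1 hVo
    have : W b = O ∩ g ⁻¹' O' := by
      have he' : ∀ z : Σ i : Fin l, S.Sp i, S.EE z ∈ O' ↔ z.2 ∈ V z.1 b := fun z =>
        Set.ext_iff.1 he z
      ext y
      constructor
      · rintro ⟨hy, z, hz, hzy⟩
        refine ⟨hy, ?_⟩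
        rw [Set.mem_preimage, ← hzy]
        exact (he' z).2 hz
      · rintro ⟨hy, hyO⟩
        obtain ⟨z, hz⟩ := hgO y hy
        refine ⟨hy, z, ?_, hz⟩
        refine (he' z).1 ?_
        rw [hz]
        exact hyO
    rw [this]
    exact hO.inter (hO'.preimage g.continuous)
  have hWa : ∀ b, AmenableCoverCondition (W b) := by
    intro b
    apply amenableCond_of_data
    rintro y ⟨hyO, ⟨i, v⟩, hv, hvy⟩
    obtain ⟨K, hK, hKp⟩ := hV3 i b v hv
    let f : C(S.Sp i, S.glued.carrier) :=
      ⟨fun x => S.EE ⟨i, x⟩, (S.emb (S.jp i)).continuous.comp continuous_subtype_val⟩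
    refine ⟨S.Sp i, inferInstance, v, f, K, (H.evalAt y).cast rfl hvy, hK, fun p hp => ?_⟩
    obtain ⟨δ, hδ, hδp⟩ := lift_path S.EE_isClosedEmbedding.isEmbedding (fun t => g (p t))
      (g.continuous.comp p.continuous) (fun t => hgO _ (hp t).1)
    have hend : ∀ t, p t = y → δ t = ⟨i, v⟩ := fun t ht =>
      S.EE_isClosedEmbedding.injective ((hδp t).trans (by rw [ht, hvy]))
    obtain ⟨p', hp'⟩ := sigma_loop δ hδ i v (hend 0 p.source) (hend 1 p.target)
    refine ⟨p', hKp p' fun t => ?_, ?_⟩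
    · obtain ⟨_, z, hz, hzp⟩ := hp t
      have : δ t = z := S.EE_isClosedEmbedding.injective ((hδp t).trans hzp.symm)
      rw [← this, hp' t] at hz
      exact hz
    · apply homotopic_conj
      intro t
      have h := hδp t
      rw [hp' t] at h
      exact h
  refine amCat_le_of_cover (ι := Fin (m + 1) ⊕ Fin s) (m + s) (by simp; omega)
    (Sum.elim (fun b => S.qq '' {a | a.2 ∈ U a.1 b ∧ a ∉ S.TT}) W) ?_ ?_ ?_
  · rintro (b | b)
    · exact (S.interior_cond (fun j => U j b) (fun j => hU1 j b) (fun j => hU3 j b)).1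
    · exact hfix b
  · intro y
    obtain ⟨a, rfl⟩ := S.qq_surjective y
    by_cases ha : a ∈ S.TT
    · obtain ⟨z, hz⟩ := ha
      obtain ⟨b, hb⟩ := hV2 z.1 z.2
      refine ⟨Sum.inr b, ?_⟩
      rw [S.qq_rep hz]
      exact ⟨hTO ⟨z, rfl⟩, z, hb, (hgE z).symm⟩
    · obtain ⟨b, hb⟩ := hU2 a.1 a.2
      exact ⟨Sum.inl b, a, ⟨hb, ha⟩, rfl⟩
  · rintro (b | b)
    · exact (S.interior_cond (fun j => U j b) (fun j => hU1 j b) (fun j => hU3 j b)).2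
    · exact hWa b

end GluingSetup

/-- **Amenable category of gluings (sum version).**
In the gluing setup, suppose the glued boundary components are `π₁`-injective in their pieces.
Then `cat_Am(M) ≤ max_j cat_Am(M_j) + max_i (cat_Am(Sᵢ⁺) + 1)`. -/
theorem amCat_gluing_sum (n k l : ℕ) (S : GluingSetup n k l)
    (h1p : ∀ i, Pi1Injective (S.Sp i)) (h1m : ∀ i, Pi1Injective (S.Sm i)) :
    amCat S.glued.carrier ≤
      (⨆ j : Fin k, amCat (S.pieces j).carrier) + ⨆ i : Fin l, (amCat (S.Sp i) + 1) := by
  have hm := fun j => le_iSup (fun j : Fin k => amCat (S.pieces j).carrier) j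
  have hs := fun i => le_iSup (fun i : Fin l => amCat (S.Sp i) + 1) i
  generalize (⨆ j : Fin k, amCat (S.pieces j).carrier) = a at *
  generalize (⨆ i : Fin l, (amCat (S.Sp i) + 1)) = b at *
  induction a using ENat.recTopCoe with
  | top => simp
  | coe a =>
    induction b using ENat.recTopCoe with
    | top => simp
    | coe b => exact_mod_cast S.amCat_bound a b hm hs

end
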